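/- Let G be a countable infinite discrete group such that for every standard probability space (X₀, μ₀) the Bernoulli shift G ↷ (X₀^G, μ₀^G) is 𝕋-cocycle superrigid (G ∈ 𝒢), and let k ≥ 2 be an integer. Consider the Bernoulli shift G ↷ ([k]^G, ν_k^G), where [k] is a k-element set and ν_k the uniform probability measure on it. If the natural map Ψ₁ : H¹(G, 𝕋) → H¹(G ↷ [k]^G; 𝕋) is surjective (i.e., H¹(G ↷ [k]^G; 𝕋) = H¹(G, 𝕋)), then H¹(G, ℤG/kℤG) = 0. -/

import Mathlib

open MeasureTheory

noncomputable section

namespace AlgActCohomology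

/-- The Borel σ-algebra on the circle group `𝕋 = {z ∈ ℂ : |z| = 1}`. -/
noncomputable instance : MeasurableSpace Circle := borel Circle
instance : BorelSpace Circle := ⟨rfl⟩

variable {G X : Type*}

/-- The diagonal action on a product. -/
def diag (a : G → X → X) : G → X × X → X × X := fun g p => (a g p.1, a g p.2)

/-- An action is ergodic if every measurable set invariant under every group element
has measure 0 or 1. -/
def IsErgodicAction [MeasurableSpace X] (a : G → X → X) (μ : Measure X) : Prop :=
  ∀ s : Set X, MeasurableSet s → (∀ g : G, a g ⁻¹' s = s) → μ s = 0 ∨ μ s = 1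

/-- An action is weakly mixing if the diagonal action on the square
(with the product measure) is ergodic. -/
def IsWeaklyMixing [MeasurableSpace X] (a : G → X → X) (μ : Measure X) : Prop :=
  IsErgodicAction (diag a) (μ.prod μ)

/-- A (p.m.p.) group action: `a : G → X → X` is an action of `G` and every `a g`
is measure preserving. -/
structure IsPmpAction [Group G] [MeasurableSpace X] (a : G → X → X) (μ : Measure X) :
    Prop where
  act_one : ∀ x, a 1 x = x
  act_mul : ∀ g h x, a (g * h) x = a g (a h x)
  measurePreserving : ∀ g, MeasurePreserving (a g) μ μ

/-- An algebraic action: an action of `G` by continuous (automatically bijective)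
additive automorphisms of a compact abelian group `X`. -/
structure IsAlgebraicAction [Group G] [AddCommGroup X] [TopologicalSpace X]
    (a : G → X → X) : Prop where
  act_one : ∀ x, a 1 x = x
  act_mul : ∀ g h x, a (g * h) x = a g (a h x)
  continuous : ∀ g, Continuous (a g)
  act_add : ∀ g x y, a g (x + y) = a g x + a g y

/-- A measurable `𝕋`-valued 1-cocycle for an action. -/
def IsCocycle1 [Group G] [MeasurableSpace X] (a : G → X → X) (μ : Measure X)
    (c : G → X → Circle) : Prop :=
  (∀ g, Measurable (c g)) ∧ ∀ g h : G, ∀ᵐ x ∂μ, c (g * h) x = c g x * c h (a g⁻¹ x)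

/-- An action is `𝕋`-cocycle superrigid if every measurable `𝕋`-valued 1-cocycle is
cohomologous to a group homomorphism `G → 𝕋`. -/
def IsCocycleSuperrigid [Group G] [MeasurableSpace X] (a : G → X → X) (μ : Measure X) :
    Prop :=
  ∀ c : G → X → Circle, IsCocycle1 a μ c →
    ∃ (lam : G →* Circle) (b : X → Circle), Measurable b ∧
      ∀ g : G, ∀ᵐ x ∂μ, c g x = lam g * (b (a g⁻¹ x) * (b x)⁻¹)

section Char

variable (X) [AddCommGroup X] [TopologicalSpace X]

/-- The Pontryagin dual `X̂` of a compact abelian group `X`: the group of continuous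
characters `X → 𝕋`, as a subgroup of the group of all functions `X → 𝕋`. -/
def charGroup : Subgroup (X → Circle) where
  carrier := {χ | Continuous χ ∧ ∀ x y, χ (x + y) = χ x * χ y}
  one_mem' := ⟨continuous_const, fun _ _ => (one_mul 1).symm⟩
  mul_mem' := fun h1 h2 => ⟨h1.1.mul h2.1, fun x y => by
    simp only [Pi.mul_apply, h1.2 x y, h2.2 x y]; exact mul_mul_mul_comm _ _ _ _⟩
  inv_mem' := fun h => ⟨h.1.inv, fun x y => by
    simp only [Pi.inv_apply, h.2 x y, mul_inv]⟩

end Char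

section Degree1

variable [Group G] [AddCommGroup X] [TopologicalSpace X]

/-- `Z¹(G, X̂)`: 1-cocycles of `G` with coefficients in the dual module `X̂`,
where `(g • χ) x = χ (a g⁻¹ x)`. -/
def modZ1 (a : G → X → X) : Subgroup (G → charGroup X) where
  carrier := {c | ∀ (g h : G) (x : X),
    ((c (g * h) : X → Circle)) x = (c h : X → Circle) (a g⁻¹ x) * (c g : X → Circle) x}
  one_mem' := by
    intro g h x
    simp
  mul_mem' := by
    intro c₁ c₂ h1 h2 g h x
    simp only [Pi.mul_apply, Subgroup.coe_mul]
    rw [h1 g h x, h2 g h x]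
    ac_rfl
  inv_mem' := by
    intro c hc g h x
    simp only [Pi.inv_apply, InvMemClass.coe_inv]
    rw [hc g h x, mul_inv]

/-- `B¹(G, X̂)`: 1-coboundaries. -/
def modB1 (a : G → X → X) : Subgroup (G → charGroup X) where
  carrier := {c | ∃ χ : charGroup X, ∀ (g : G) (x : X),
    (c g : X → Circle) x = (χ : X → Circle) (a g⁻¹ x) * ((χ : X → Circle) x)⁻¹}
  one_mem' := ⟨1, by intro g x; simp⟩
  mul_mem' := by
    rintro c₁ c₂ ⟨χ₁, h1⟩ ⟨χ₂, h2⟩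
    refine ⟨χ₁ * χ₂, fun g x => ?_⟩
    simp only [Pi.mul_apply, Subgroup.coe_mul]
    rw [h1 g x, h2 g x, mul_inv]
    ac_rfl
  inv_mem' := by
    rintro c ⟨χ, h⟩
    refine ⟨χ⁻¹, fun g x => ?_⟩
    simp only [Pi.inv_apply, InvMemClass.coe_inv]
    rw [h g x, mul_inv, inv_inv]

variable [MeasurableSpace X]

/-- Measurable `𝕋`-valued 1-cocycles for an action, as a subgroup of all maps
`G → X → 𝕋`. -/
def measZ1 (a : G → X → X) (μ : Measure X) : Subgroup (G → X → Circle) where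
  carrier := {c | (∀ g, Measurable (c g)) ∧
    ∀ g h : G, ∀ᵐ x ∂μ, c (g * h) x = c g x * c h (a g⁻¹ x)}
  one_mem' := ⟨fun _ => measurable_const, fun g h => ae_of_all _ fun x => by simp⟩
  mul_mem' := by
    rintro c₁ c₂ ⟨m1, h1⟩ ⟨m2, h2⟩
    refine ⟨fun g => (m1 g).mul (m2 g), fun g h => ?_⟩
    filter_upwards [h1 g h, h2 g h] with x e1 e2
    simp only [Pi.mul_apply]
    rw [e1, e2]
    ac_rfl
  inv_mem' := by
    rintro c ⟨m, hc⟩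
    refine ⟨fun g => (m g).inv, fun g h => ?_⟩
    filter_upwards [hc g h] with x e
    simp only [Pi.inv_apply]
    rw [e, mul_inv]

/-- The subgroup of measurable 1-cocycles that are cohomologous to (the cocycle
induced by) a group homomorphism `G → 𝕋`; this is the preimage in `Z¹(G ↷ X; 𝕋)` of
the subgroup `Ψ₁(H¹(G, 𝕋))` of `H¹(G ↷ X; 𝕋)`, so that
`H¹(G ↷ X; 𝕋)/Ψ₁(H¹(G, 𝕋)) = measZ1 ⧸ measBPsi1`. -/
def measBPsi1 (a : G → X → X) (μ : Measure X) : Subgroup (G → X → Circle) where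
  carrier := {c | ∃ (φ : G →* Circle) (b : X → Circle), Measurable b ∧
    ∀ g : G, ∀ᵐ x ∂μ, c g x = φ g * (b (a g⁻¹ x) * (b x)⁻¹)}
  one_mem' := ⟨1, 1, measurable_const, fun g => ae_of_all _ fun x => by simp⟩
  mul_mem' := by
    rintro c₁ c₂ ⟨φ₁, b₁, hb₁, h1⟩ ⟨φ₂, b₂, hb₂, h2⟩
    refine ⟨φ₁ * φ₂, b₁ * b₂, hb₁.mul hb₂, fun g => ?_⟩
    filter_upwards [h1 g, h2 g] with x e1 e2
    simp only [Pi.mul_apply, MonoidHom.mul_apply]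
    rw [e1, e2, mul_inv]
    ac_rfl
  inv_mem' := by
    rintro c ⟨φ, b, hb, h⟩
    refine ⟨φ⁻¹, b⁻¹, hb.inv, fun g => ?_⟩
    filter_upwards [h g] with x e
    simp only [Pi.inv_apply, MonoidHom.inv_apply]
    rw [e, mul_inv, mul_inv, inv_inv]

/-- The measurable cocycle induced by a module cocycle: evaluation of characters. -/
def ind1 (c : G → charGroup X) : G → X → Circle := fun g => (c g : X → Circle)

end Degree1

section Degree2

variable [Group G]

/-- A `𝕋`-valued 2-cocycle of the group `G` (for the trivial `G`-module `𝕋`). -/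
def IsGrpCocycle2 (θ : G → G → Circle) : Prop :=
  ∀ g₁ g₂ g₃ : G, θ g₂ g₃ * (θ (g₁ * g₂) g₃)⁻¹ * θ g₁ (g₂ * g₃) * (θ g₁ g₂)⁻¹ = 1

private lemma mul4 {M : Type*} [CommGroup M] {a₁ b₁ c₁ d₁ a₂ b₂ c₂ d₂ : M}
    (h₁ : a₁ * b₁⁻¹ * c₁ * d₁⁻¹ = 1) (h₂ : a₂ * b₂⁻¹ * c₂ * d₂⁻¹ = 1) :
    (a₁ * a₂) * (b₁ * b₂)⁻¹ * (c₁ * c₂) * (d₁ * d₂)⁻¹ = 1 := by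
  have e : (a₁ * a₂) * (b₁ * b₂)⁻¹ * (c₁ * c₂) * (d₁ * d₂)⁻¹
      = (a₁ * b₁⁻¹ * c₁ * d₁⁻¹) * (a₂ * b₂⁻¹ * c₂ * d₂⁻¹) := by
    simp only [mul_inv]; ac_rfl
  rw [e, h₁, h₂, one_mul]

private lemma inv4 {M : Type*} [CommGroup M] {a b c d : M}
    (h : a * b⁻¹ * c * d⁻¹ = 1) : a⁻¹ * b * c⁻¹ * d = 1 := by
  have e : a⁻¹ * b * c⁻¹ * d = (a * b⁻¹ * c * d⁻¹)⁻¹ := by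
    simp only [mul_inv, inv_inv]; try ac_rfl
  rw [e, h, inv_one]

variable [AddCommGroup X] [TopologicalSpace X]

/-- `Z²(G, X̂)`: 2-cocycles of `G` with coefficients in the dual module `X̂`. -/
def modZ2 (a : G → X → X) : Subgroup (G → G → charGroup X) where
  carrier := {c | ∀ (g₁ g₂ g₃ : G) (x : X),
    (c g₂ g₃ : X → Circle) (a g₁⁻¹ x) * ((c (g₁ * g₂) g₃ : X → Circle) x)⁻¹ *
      (c g₁ (g₂ * g₃) : X → Circle) x * ((c g₁ g₂ : X → Circle) x)⁻¹ = 1}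
  one_mem' := by intro g₁ g₂ g₃ x; simp
  mul_mem' := by
    intro c₁ c₂ h1 h2 g₁ g₂ g₃ x
    simp only [Pi.mul_apply, Subgroup.coe_mul]
    exact mul4 (h1 g₁ g₂ g₃ x) (h2 g₁ g₂ g₃ x)
  inv_mem' := by
    intro c hc g₁ g₂ g₃ x
    simp only [Pi.inv_apply, InvMemClass.coe_inv, inv_inv]
    exact inv4 (hc g₁ g₂ g₃ x)

/-- `B²(G, X̂)`: 2-coboundaries. -/
def modB2 (a : G → X → X) : Subgroup (G → G → charGroup X) where
  carrier := {c | ∃ b : G → charGroup X, ∀ (g h : G) (x : X),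
    (c g h : X → Circle) x =
      (b h : X → Circle) (a g⁻¹ x) * ((b (g * h) : X → Circle) x)⁻¹ * (b g : X → Circle) x}
  one_mem' := ⟨1, by intro g h x; simp⟩
  mul_mem' := by
    rintro c₁ c₂ ⟨b₁, h1⟩ ⟨b₂, h2⟩
    refine ⟨b₁ * b₂, fun g h x => ?_⟩
    simp only [Pi.mul_apply, Subgroup.coe_mul]
    rw [h1 g h x, h2 g h x, mul_inv]
    try ac_rfl
  inv_mem' := by
    rintro c ⟨b, hb⟩
    refine ⟨b⁻¹, fun g h x => ?_⟩
    simp only [Pi.inv_apply, InvMemClass.coe_inv]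
    rw [hb g h x]
    simp only [mul_inv, inv_inv]
    try ac_rfl

variable [MeasurableSpace X]

/-- Measurable `𝕋`-valued 2-cocycles for an action. -/
def measZ2 (a : G → X → X) (μ : Measure X) : Subgroup (G → G → X → Circle) where
  carrier := {c | (∀ g h, Measurable (c g h)) ∧
    ∀ g₁ g₂ g₃ : G, ∀ᵐ x ∂μ,
      c g₂ g₃ (a g₁⁻¹ x) * (c (g₁ * g₂) g₃ x)⁻¹ * c g₁ (g₂ * g₃) x * (c g₁ g₂ x)⁻¹ = 1}
  one_mem' := ⟨fun _ _ => measurable_const, fun g₁ g₂ g₃ => ae_of_all _ fun x => by simp⟩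
  mul_mem' := by
    rintro c₁ c₂ ⟨m1, h1⟩ ⟨m2, h2⟩
    refine ⟨fun g h => (m1 g h).mul (m2 g h), fun g₁ g₂ g₃ => ?_⟩
    filter_upwards [h1 g₁ g₂ g₃, h2 g₁ g₂ g₃] with x e1 e2
    simp only [Pi.mul_apply]
    exact mul4 e1 e2
  inv_mem' := by
    rintro c ⟨m, hc⟩
    refine ⟨fun g h => (m g h).inv, fun g₁ g₂ g₃ => ?_⟩
    filter_upwards [hc g₁ g₂ g₃] with x e
    simp only [Pi.inv_apply, inv_inv]
    exact inv4 e

/-- The subgroup of measurable 2-cocycles that are cohomologous to a constant (in the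
space variable) 2-cocycle coming from a group 2-cocycle `θ : G² → 𝕋`; this is the
preimage in `Z²(G ↷ X; 𝕋)` of the subgroup `Ψ₂(H²(G, 𝕋))` of `H²(G ↷ X; 𝕋)`, so that
`H²(G ↷ X; 𝕋)/Ψ₂(H²(G, 𝕋)) = measZ2 ⧸ measBPsi2`. -/
def measBPsi2 (a : G → X → X) (μ : Measure X) : Subgroup (G → G → X → Circle) where
  carrier := {c | ∃ (θ : G → G → Circle) (b : G → X → Circle), IsGrpCocycle2 θ ∧
    (∀ g, Measurable (b g)) ∧
    ∀ g h : G, ∀ᵐ x ∂μ, c g h x = θ g h * (b h (a g⁻¹ x) * (b (g * h) x)⁻¹ * b g x)}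
  one_mem' := ⟨fun _ _ => 1, fun _ => 1, fun g₁ g₂ g₃ => by simp, fun _ => measurable_const,
    fun g h => ae_of_all _ fun x => by simp⟩
  mul_mem' := by
    rintro c₁ c₂ ⟨θ₁, b₁, hθ₁, hb₁, h1⟩ ⟨θ₂, b₂, hθ₂, hb₂, h2⟩
    refine ⟨fun g h => θ₁ g h * θ₂ g h, fun g => b₁ g * b₂ g,
      fun g₁ g₂ g₃ => mul4 (hθ₁ g₁ g₂ g₃) (hθ₂ g₁ g₂ g₃),
      fun g => (hb₁ g).mul (hb₂ g), fun g h => ?_⟩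
    filter_upwards [h1 g h, h2 g h] with x e1 e2
    simp only [Pi.mul_apply]
    rw [e1, e2]
    simp only [mul_inv]
    ac_rfl
  inv_mem' := by
    rintro c ⟨θ, b, hθ, hb, hc⟩
    refine ⟨fun g h => (θ g h)⁻¹, fun g => (b g)⁻¹,
      fun g₁ g₂ g₃ => by simpa only [inv_inv] using inv4 (hθ g₁ g₂ g₃),
      fun g => (hb g).inv, fun g h => ?_⟩
    filter_upwards [hc g h] with x e
    simp only [Pi.inv_apply]
    rw [e]
    simp only [mul_inv, inv_inv]
    try ac_rfl

/-- The measurable 2-cocycle induced by a module 2-cocycle: evaluation of characters. -/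
def ind2 (c : G → G → charGroup X) : G → G → X → Circle := fun g h => (c g h : X → Circle)

end Degree2


section Bernoulli

/-- The Bernoulli shift action `G ↷ X₀^G`, `(g • x) h = x (g⁻¹ h)`. -/
def bernoulliShift (G X₀ : Type*) [Group G] : G → (G → X₀) → (G → X₀) :=
  fun g x h => x (g⁻¹ * h)

/-- `μ` is the product along `ι` of copies of `μ₀`: it gives every finite-dimensional
cylinder set its product measure.  (This characterizes the Bernoulli product measure
`μ₀^ι` uniquely.) -/
def IsBernoulliMeasure {ι X₀ : Type*} [MeasurableSpace X₀] (μ₀ : Measure X₀)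
    (μ : Measure (ι → X₀)) : Prop :=
  ∀ (s : Finset ι) (t : ι → Set X₀), (∀ i, MeasurableSet (t i)) →
    μ {x | ∀ i ∈ s, x i ∈ t i} = ∏ i ∈ s, μ₀ (t i)

/-- The class `𝒢` of countable groups `G` such that for every standard probability
space `(X₀, μ₀)` the Bernoulli shift `G ↷ (X₀^G, μ₀^G)` is `𝕋`-cocycle superrigid. -/
def InClassG (G : Type*) [Group G] : Prop :=
  ∀ (X₀ : Type) [MeasurableSpace X₀] [StandardBorelSpace X₀]
    (μ₀ : Measure X₀) [IsProbabilityMeasure μ₀]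
    (μ : Measure (G → X₀)) [IsProbabilityMeasure μ],
    IsBernoulliMeasure μ₀ μ → IsCocycleSuperrigid (bernoulliShift G X₀) μ

end Bernoulli

/-!
Evaluating a module cocycle `z` through the characters `χ` gives a measurable cocycle
`(g, x) ↦ χ (z g) x`. Suppose it equals `λ g * (b (g⁻¹ x) * (b x)⁻¹)`. Some Fourier coefficient of
the unimodular function `b` is nonzero, say at `m`, and invariance of `μ` makes the coefficients of
`b` at all `g m - z g` equal to it in modulus. By Bessel's inequality `g m - z g` takes only
finitely many values, hence so does the cohomologous cocycle `w g = g m - m - z g`. Since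
`g (w h) = w (g h) - w g`, each `w h` has a finite orbit; nonzero elements have infinite orbits, so
`w = 0` and `z` is a coboundary.
-/

universe u

section FiniteRangeCocycles

variable {R G : Type u} [CommRing R] [Group G]

theorem cocycles₁_map_mul {V : Rep R G} (z : groupCohomology.cocycles₁ V) (g h : G) :
    z (g * h) = V.ρ g (z h) + z g :=
  (groupCohomology.mem_cocycles₁_iff z).1 z.2 g h

theorem cocycles₁_eq_zero_of_finite_range {V : Rep R G}
    (horbit : ∀ v : V, v ≠ 0 → (Set.range fun g => V.ρ g v).Infinite)
    (z : groupCohomology.cocycles₁ V) (hz : (Set.range z).Finite) : z = 0 := by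
  refine Subtype.ext (funext fun h => ?_)
  by_contra hne
  refine horbit _ hne ((hz.sub hz).subset ?_)
  rintro _ ⟨g, rfl⟩
  exact ⟨_, ⟨g * h, rfl⟩, _, ⟨g, rfl⟩, sub_eq_of_eq_add (cocycles₁_map_mul z g h)⟩

theorem mem_coboundaries₁_of_finite_range_sub {V : Rep R G}
    (horbit : ∀ v : V, v ≠ 0 → (Set.range fun g => V.ρ g v).Infinite)
    (z : groupCohomology.cocycles₁ V) (m : V)
    (hfin : (Set.range fun g => V.ρ g m - z g).Finite) :
    ⇑z ∈ groupCohomology.coboundaries₁ V := by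
  let w : groupCohomology.cocycles₁ V :=
    ⟨groupCohomology.d₀₁ V m, groupCohomology.d₀₁_apply_mem_cocycles₁ m⟩
  have hrange : (Set.range (w - z)).Finite := by
    refine (hfin.image (· - m)).subset ?_
    rintro _ ⟨g, rfl⟩
    exact ⟨_, ⟨g, rfl⟩, sub_right_comm _ _ _⟩
  have hw : w - z = 0 := cocycles₁_eq_zero_of_finite_range horbit _ hrange
  exact ⟨m, congrArg Subtype.val (sub_eq_zero.1 hw)⟩

theorem infinite_range_ofMulAction {S : Type*} [MulAction G S]
    (horbit : ∀ s : S, (MulAction.orbit G s).Infinite) (v : MonoidAlgebra R S) (hv : v ≠ 0) :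
    (Set.range fun g => Representation.ofMulAction R G S g v).Infinite := by
  obtain ⟨s, hs⟩ : ∃ s, v.coeff s ≠ 0 := by
    by_contra! h
    exact hv (MonoidAlgebra.ext (Finsupp.ext h))
  refine fun hfin => horbit s
    ((hfin.biUnion fun w _ => w.coeff.support.finite_toSet).subset ?_)
  rintro _ ⟨g, rfl⟩
  refine Set.mem_biUnion ⟨g, rfl⟩ (Finsupp.mem_support_iff.2 ?_)
  rwa [Representation.coeff_ofMulAction, inv_smul_smul]

end FiniteRangeCocycles

section Fourier

open scoped ComplexConjugate

variable {Y : Type*} [MeasurableSpace Y] {μ : Measure Y}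

theorem measurable_circle_coe : Measurable fun z : Circle => (z : ℂ) :=
  (show Continuous fun z : Circle => (z : ℂ) by fun_prop).measurable

theorem memLp_circle_coe [IsFiniteMeasure μ] {b : Y → Circle} (hb : Measurable b)
    (p : ENNReal) : MemLp (fun x => (b x : ℂ)) p μ :=
  MemLp.of_bound (measurable_circle_coe.comp hb).aestronglyMeasurable 1
    (ae_of_all _ fun x => (Circle.norm_coe (b x)).le)

theorem integrable_circle_coe [IsFiniteMeasure μ] {b : Y → Circle} (hb : Measurable b) :
    Integrable (fun x => (b x : ℂ)) μ :=
  (memLp_circle_coe hb 1).integrable le_rfl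

variable [AddCommGroup Y]

/-- The Fourier coefficient `∫ conj ψ · φ dμ` of `φ` at the character `ψ`. -/
def fourierCoefficient (μ : Measure Y) (φ : Y → ℂ) (ψ : AddChar Y Circle) : ℂ :=
  ∫ x, conj (ψ x : ℂ) * φ x ∂μ

theorem integral_addChar_eq_zero [MeasurableAdd Y] [μ.IsAddLeftInvariant]
    {ψ : AddChar Y Circle} (hψ : ψ ≠ 0) : ∫ x, (ψ x : ℂ) ∂μ = 0 := by
  obtain ⟨y, hy⟩ := (AddChar.ne_zero_iff).1 hψ
  have hinv : (ψ y : ℂ) * ∫ x, (ψ x : ℂ) ∂μ = ∫ x, (ψ x : ℂ) ∂μ := by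
    rw [← integral_const_mul]
    simpa only [AddChar.map_add_eq_mul, Circle.coe_mul] using
      integral_add_left_eq_self (μ := μ) (fun x => (ψ x : ℂ)) y
  refine (mul_left_eq_self₀.1 hinv).resolve_left fun h => hy ?_
  exact Circle.coe_eq_one.1 h

theorem fourierCoefficient_addChar [MeasurableAdd Y] [μ.IsAddLeftInvariant]
    [IsProbabilityMeasure μ] [DecidableEq (AddChar Y Circle)] (ψ θ : AddChar Y Circle) :
    fourierCoefficient μ (fun x => θ x) ψ = if ψ = θ then 1 else 0 := by
  have hsub : ∀ x, conj (ψ x : ℂ) * θ x = ((θ - ψ) x : Circle) := fun x => by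
    rw [AddChar.sub_apply', Circle.coe_div, ← Circle.coe_inv_eq_conj, Circle.coe_inv,
      div_eq_inv_mul]
  simp only [fourierCoefficient, hsub]
  split_ifs with h
  · simp [h]
  · exact integral_addChar_eq_zero (sub_ne_zero.2 (Ne.symm h))

theorem inner_toLp_eq_fourierCoefficient {φ : Y → ℂ} (hφ : MemLp φ 2 μ)
    {ψ : AddChar Y Circle} (hψ : MemLp (fun x => (ψ x : ℂ)) 2 μ) :
    inner ℂ (hψ.toLp _) (hφ.toLp φ) = fourierCoefficient μ φ ψ := by
  rw [L2.inner_def]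
  refine integral_congr_ae ?_
  filter_upwards [hψ.coeFn_toLp, hφ.coeFn_toLp] with x hψx hφx
  rw [hψx, hφx, RCLike.inner_apply']

theorem orthonormal_measurable_addChar [MeasurableAdd Y] [μ.IsAddLeftInvariant]
    [IsProbabilityMeasure μ] :
    Orthonormal ℂ fun ψ : {ψ : AddChar Y Circle // Measurable ψ} =>
      (memLp_circle_coe (μ := μ) ψ.2 2).toLp _ := by
  classical
  refine orthonormal_iff_ite.2 fun ψ θ => ?_
  rw [inner_toLp_eq_fourierCoefficient, fourierCoefficient_addChar]
  simp only [Subtype.ext_iff]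

theorem finite_le_norm_fourierCoefficient [MeasurableAdd Y] [μ.IsAddLeftInvariant]
    [IsProbabilityMeasure μ] {φ : Y → ℂ} (hφ : MemLp φ 2 μ) {ε : ℝ} (hε : 0 < ε) :
    {ψ : AddChar Y Circle | Measurable ψ ∧ ε ≤ ‖fourierCoefficient μ φ ψ‖}.Finite := by
  have hbessel := (orthonormal_measurable_addChar (μ := μ)).inner_products_summable
    (hφ.toLp φ)
  simp only [inner_toLp_eq_fourierCoefficient] at hbessel
  have hsmall := hbessel.tendsto_cofinite_zero.eventually_lt_const (pow_pos hε 2)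
  refine ((Filter.eventually_cofinite.1 hsmall).image Subtype.val).subset ?_
  rintro ψ ⟨hψ, hle⟩
  exact ⟨⟨ψ, hψ⟩, (pow_le_pow_left₀ hε.le hle 2).not_gt, rfl⟩

theorem norm_fourierCoefficient_sub {T : Y → Y} (hT : MeasurePreserving T μ μ)
    {b : Y → Circle} (hb : Measurable b) {lam : Circle} {θ ψ ψ' : AddChar Y Circle}
    (hψ : Measurable ψ) (hψ' : ∀ x, ψ' x = ψ (T x))
    (hθ : ∀ᵐ x ∂μ, θ x = lam * (b (T x) * (b x)⁻¹)) :
    ‖fourierCoefficient μ (fun x => b x) (ψ' - θ)‖ =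
      ‖fourierCoefficient μ (fun x => b x) ψ‖ := by
  have hpoint : ∀ᵐ x ∂μ, conj (((ψ' - θ) x : Circle) : ℂ) * b x =
      lam * (conj (ψ (T x) : ℂ) * b (T x)) := by
    filter_upwards [hθ] with x hx
    have : ((ψ' - θ) x)⁻¹ * b x = lam * ((ψ (T x))⁻¹ * b (T x)) := by
      rw [AddChar.sub_apply', hψ', hx, inv_div, div_eq_mul_inv]
      calc lam * (b (T x) * (b x)⁻¹) * (ψ (T x))⁻¹ * b x
        _ = lam * ((ψ (T x))⁻¹ * b (T x)) * ((b x)⁻¹ * b x) := by ac_rfl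
        _ = lam * ((ψ (T x))⁻¹ * b (T x)) := by rw [inv_mul_cancel, mul_one]
    simpa only [Circle.coe_mul, Circle.coe_inv_eq_conj] using congrArg ((↑) : Circle → ℂ) this
  have hmeas : AEStronglyMeasurable (fun x => conj (ψ x : ℂ) * b x) (μ.map T) :=
    ((Complex.continuous_conj.measurable.comp (measurable_circle_coe.comp hψ)).mul
      (measurable_circle_coe.comp hb)).aestronglyMeasurable
  have hmap := integral_map hT.aemeasurable hmeas
  rw [hT.map_eq] at hmap
  rw [fourierCoefficient, integral_congr_ae hpoint, integral_const_mul, ← hmap, norm_mul,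
    Circle.norm_coe, one_mul, fourierCoefficient]

end Fourier

section FourierSystem

variable {M Y : Type*} [AddCommGroup M] [AddCommGroup Y] [MeasurableSpace Y]

/-- `χ` identifies the abstract group `M` with a complete group of measurable characters of
`(Y, μ)`: distinct elements give distinct characters, and an integrable function is determined
by its Fourier coefficients at these characters. For a compact abelian group `Y` with Haar
measure this is what Pontryagin duality provides for `M = Ŷ`. -/
structure IsFourierSystem (μ : Measure Y) (χ : M →+ AddChar Y Circle) : Prop where
  injective : Function.Injective χ
  measurable : ∀ m, Measurable (χ m)
  ae_eq_zero : ∀ φ : Y → ℂ, Integrable φ μ → (∀ m, fourierCoefficient μ φ (χ m) = 0) →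
    φ =ᵐ[μ] 0

namespace IsFourierSystem

variable {μ : Measure Y} {χ : M →+ AddChar Y Circle}

theorem comp_addEquiv (hχ : IsFourierSystem μ χ) {N : Type*} [AddCommGroup N] (e : N ≃+ M) :
    IsFourierSystem μ (χ.comp e.toAddMonoidHom) where
  injective := hχ.injective.comp e.injective
  measurable n := hχ.measurable (e n)
  ae_eq_zero φ hφ hzero := hχ.ae_eq_zero φ hφ (e.surjective.forall.2 hzero)

variable [IsProbabilityMeasure μ]

theorem exists_fourierCoefficient_ne_zero (hχ : IsFourierSystem μ χ) {b : Y → Circle}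
    (hb : Measurable b) : ∃ m, fourierCoefficient μ (fun x => b x) (χ m) ≠ 0 := by
  by_contra! hzero
  obtain ⟨x, hx⟩ := (hχ.ae_eq_zero _ (integrable_circle_coe hb) hzero).exists
  exact Circle.coe_ne_zero _ hx

theorem finite_le_norm_fourierCoefficient (hχ : IsFourierSystem μ χ) [MeasurableAdd Y]
    [μ.IsAddLeftInvariant] {φ : Y → ℂ} (hφ : MemLp φ 2 μ) {ε : ℝ} (hε : 0 < ε) :
    {m | ε ≤ ‖fourierCoefficient μ φ (χ m)‖}.Finite :=
  ((AlgActCohomology.finite_le_norm_fourierCoefficient hφ hε).preimage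
    hχ.injective.injOn).subset fun m hm => ⟨hχ.measurable m, hm⟩

end IsFourierSystem

end FourierSystem

section Superrigid

variable {R G : Type u} [CommRing R] [Group G] {V : Rep R G} {Y : Type*} [AddCommGroup Y]
  [MeasurableSpace Y] {μ : Measure Y} {a : G → Y → Y} {χ : V →+ AddChar Y Circle}

theorem isCocycle1_addChar (hmeas : ∀ v, Measurable (χ v))
    (hequiv : ∀ g v x, χ (V.ρ g v) x = χ v (a g⁻¹ x)) (z : groupCohomology.cocycles₁ V) :
    IsCocycle1 a μ fun g => χ (z g) := by
  refine ⟨fun g => hmeas (z g), fun g h => ae_of_all _ fun x => ?_⟩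
  simp only [cocycles₁_map_mul, map_add, AddChar.add_apply, hequiv, mul_comm]

theorem mem_coboundaries₁_of_isFourierSystem [MeasurableAdd Y] [μ.IsAddLeftInvariant]
    [IsProbabilityMeasure μ] (hχ : IsFourierSystem μ χ)
    (ha : ∀ g, MeasurePreserving (a g) μ μ)
    (hequiv : ∀ g v x, χ (V.ρ g v) x = χ v (a g⁻¹ x))
    (horbit : ∀ v : V, v ≠ 0 → (Set.range fun g => V.ρ g v).Infinite)
    (z : groupCohomology.cocycles₁ V) {lam : G → Circle} {b : Y → Circle} (hb : Measurable b)
    (hz : ∀ g, ∀ᵐ x ∂μ, χ (z g) x = lam g * (b (a g⁻¹ x) * (b x)⁻¹)) :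
    ⇑z ∈ groupCohomology.coboundaries₁ V := by
  obtain ⟨m, hm⟩ := hχ.exists_fourierCoefficient_ne_zero hb
  refine mem_coboundaries₁_of_finite_range_sub horbit z m ?_
  refine (hχ.finite_le_norm_fourierCoefficient (memLp_circle_coe hb 2)
    (norm_pos_iff.2 hm)).subset ?_
  rintro _ ⟨g, rfl⟩
  rw [Set.mem_ofPred_eq, map_sub]
  exact (norm_fourierCoefficient_sub (ha g⁻¹) hb (hχ.measurable m) (hequiv g m) (hz g)).ge

theorem H1_eq_zero_of_isCocycleSuperrigid [MeasurableAdd Y] [μ.IsAddLeftInvariant]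
    [IsProbabilityMeasure μ] (hχ : IsFourierSystem μ χ)
    (ha : ∀ g, MeasurePreserving (a g) μ μ)
    (hequiv : ∀ g v x, χ (V.ρ g v) x = χ v (a g⁻¹ x))
    (horbit : ∀ v : V, v ≠ 0 → (Set.range fun g => V.ρ g v).Infinite)
    (hrigid : IsCocycleSuperrigid a μ) (x : groupCohomology.H1 V) : x = 0 := by
  induction x using groupCohomology.H1_induction_on with
  | h z =>
    obtain ⟨lam, b, hb, hz⟩ := hrigid _ (isCocycle1_addChar hχ.measurable hequiv z)
    exact (groupCohomology.H1π_eq_zero_iff z).2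
      (mem_coboundaries₁_of_isFourierSystem hχ ha hequiv horbit z hb hz)

end Superrigid

section TrigPolynomials

variable {M Y : Type*} [AddCommGroup M] [AddCommGroup Y]

/-- The algebra of trigonometric polynomials: the complex functions on `Y` generated by the
characters `χ m`. -/
def trigPolynomials (χ : M →+ AddChar Y Circle) : Subalgebra ℂ (Y → ℂ) :=
  Algebra.adjoin ℂ (Set.range fun m x => (χ m x : ℂ))

theorem toSubmodule_trigPolynomials (χ : M →+ AddChar Y Circle) :
    (trigPolynomials χ).toSubmodule = Submodule.span ℂ (Set.range fun m x => (χ m x : ℂ)) := by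
  let chars : Submonoid (Y → ℂ) :=
    { carrier := Set.range fun m x => (χ m x : ℂ)
      one_mem' := ⟨0, by simp only [map_zero, AddChar.zero_apply, Circle.coe_one]; rfl⟩
      mul_mem' := by
        rintro _ _ ⟨m, rfl⟩ ⟨n, rfl⟩
        exact ⟨m + n, by simp only [map_add, AddChar.add_apply, Circle.coe_mul]; rfl⟩ }
  have hclosure : Submonoid.closure (Set.range fun m x => (χ m x : ℂ)) ≤ chars :=
    Submonoid.closure_le.2 subset_rfl
  exact Algebra.adjoin_eq_span_of_subset ℂ fun _ hp => Submodule.subset_span (hclosure hp)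

theorem integral_mul_eq_zero_of_mem_trigPolynomials [MeasurableSpace Y] {μ : Measure Y}
    {χ : M →+ AddChar Y Circle} (hmeas : ∀ m, Measurable (χ m)) {φ : Y → ℂ}
    (hφ : Integrable φ μ) (hzero : ∀ m, fourierCoefficient μ φ (χ m) = 0) {p : Y → ℂ}
    (hp : p ∈ trigPolynomials χ) : ∫ x, p x * φ x ∂μ = 0 := by
  suffices h : Integrable (fun x => p x * φ x) μ ∧ ∫ x, p x * φ x ∂μ = 0 from h.2
  rw [← Subalgebra.mem_toSubmodule, toSubmodule_trigPolynomials] at hp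
  induction hp using Submodule.span_induction with
  | mem p hp =>
    obtain ⟨m, rfl⟩ := hp
    refine ⟨hφ.bdd_mul (measurable_circle_coe.comp (hmeas m)).aestronglyMeasurable
      (ae_of_all _ fun x => (Circle.norm_coe (χ m x)).le), ?_⟩
    simpa only [fourierCoefficient, map_neg, AddChar.neg_apply', Circle.coe_inv_eq_conj,
      Complex.conj_conj] using hzero (-m)
  | zero => simp
  | add p q _ _ hp hq =>
    simp only [Pi.add_apply, add_mul]
    exact ⟨hp.1.add hq.1, by rw [integral_add hp.1 hq.1, hp.2, hq.2, add_zero]⟩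
  | smul c p _ hp =>
    simp only [Pi.smul_apply, smul_eq_mul, mul_assoc]
    exact ⟨hp.1.const_mul c, by rw [integral_const_mul, hp.2, mul_zero]⟩

end TrigPolynomials

section PiSystem

variable {Y E : Type*} [mY : MeasurableSpace Y] {μ : Measure Y} [NormedAddCommGroup E]
  [NormedSpace ℝ E] [CompleteSpace E]

theorem ae_eq_zero_of_forall_setIntegral_eq_zero_of_isPiSystem {φ : Y → E}
    (hφ : Integrable φ μ) {C : Set (Set Y)} (hgen : mY = MeasurableSpace.generateFrom C)
    (hC : IsPiSystem C) (huniv : Set.univ ∈ C) (hzero : ∀ s ∈ C, ∫ x in s, φ x ∂μ = 0) :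
    φ =ᵐ[μ] 0 := by
  suffices h : ∀ s, MeasurableSet s → ∫ x in s, φ x ∂μ = 0 from
    hφ.ae_eq_zero_of_forall_setIntegral_eq_zero fun s hs _ => h s hs
  intro s hs
  induction s, hs using MeasurableSpace.induction_on_inter hgen hC with
  | empty => exact setIntegral_empty
  | basic s hs => exact hzero s hs
  | compl s hs ih =>
    have htotal : ∫ x, φ x ∂μ = 0 := by simpa only [setIntegral_univ] using hzero _ huniv
    rw [← htotal, ← integral_add_compl hs hφ, ih, zero_add]
  | iUnion f hdisj hmeas ih =>
    rw [integral_iUnion hmeas hdisj hφ.integrableOn, tsum_congr ih, tsum_zero]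

end PiSystem

section ProductCharacters

variable {ι R A : Type*} [AddCommGroup R] [AddCommGroup A]

/-- The character `x ↦ ∏ i, e (f i) (x i)` of the product group `ι → A` attached to a finitely
supported family `f`, where `e` turns elements of `R` into characters of `A`. -/
def productChar (e : R →+ AddChar A Circle) : (ι →₀ R) →+ AddChar (ι → A) Circle :=
  Finsupp.liftAddHom fun i => AddMonoidHom.mk'
    (fun r => (e r).compAddMonoidHom (Pi.evalAddMonoidHom (fun _ => A) i))
    fun r s => by rw [map_add]; rfl

theorem productChar_single (e : R →+ AddChar A Circle) (i : ι) (r : R) (x : ι → A) :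
    productChar e (Finsupp.single i r) x = e r (x i) := by
  rw [productChar, Finsupp.liftAddHom_apply_single]
  rfl

theorem productChar_piSingle [DecidableEq ι] (e : R →+ AddChar A Circle) (f : ι →₀ R) (i : ι)
    (a : A) : productChar e f (Pi.single i a) = e (f i) a := by
  induction f using Finsupp.induction_linear with
  | zero => simp
  | add f g hf hg => simp [hf, hg]
  | single j r =>
    rw [productChar_single]
    by_cases h : i = j
    · subst h; simp
    · simp [h, Ne.symm h]

theorem productChar_injective {e : R →+ AddChar A Circle} (he : Function.Injective e) :
    Function.Injective (productChar e : (ι →₀ R) →+ AddChar (ι → A) Circle) := by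
  classical
  refine fun f g hfg => Finsupp.ext fun i => he (DFunLike.ext _ _ fun a => ?_)
  rw [← productChar_piSingle, ← productChar_piSingle, hfg]

theorem productChar_measurable [MeasurableSpace A] {e : R →+ AddChar A Circle}
    (he : ∀ r, Measurable (e r)) (f : ι →₀ R) : Measurable (productChar e f) := by
  induction f using Finsupp.induction_linear with
  | zero => exact measurable_const
  | add f g hf hg => exact (map_add (productChar e) f g).symm ▸ hf.mul hg
  | single i r =>
    rw [funext (productChar_single e i r)]
    exact (he r).comp (measurable_pi_apply i)

theorem productChar_bernoulliShift {G : Type*} [Group G] {R : Type*} [Ring R]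
    (e : R →+ AddChar A Circle) (g : G) (v : MonoidAlgebra R G) (x : G → A) :
    productChar e (Representation.ofMulAction R G G g v).coeff x =
      productChar e v.coeff (bernoulliShift G A g⁻¹ x) := by
  induction v using MonoidAlgebra.induction_linear with
  | zero => simp
  | add v w hv hw => simp [hv, hw]
  | single h r =>
    simp [Representation.ofMulAction_single, productChar_single, bernoulliShift]

theorem eval_mem_trigPolynomials [Finite A] {e : R →+ AddChar A Circle}
    (he : Function.Surjective e) (i : ι) (u : A → ℂ) :
    (fun x => u (x i)) ∈ trigPolynomials (productChar (ι := ι) e) := by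
  let eval : (A → ℂ) →ₗ[ℂ] (ι → A) → ℂ := LinearMap.funLeft ℂ ℂ fun x => x i
  suffices hspan : Submodule.span ℂ (Set.range (AddChar.complexBasis A)) ≤
      (trigPolynomials (productChar e)).toSubmodule.comap eval by
    rw [Module.Basis.span_eq] at hspan
    exact hspan (Submodule.mem_top (x := u))
  rw [Submodule.span_le]
  rintro _ ⟨ψ, rfl⟩
  obtain ⟨r, hr⟩ := he (AddChar.circleEquivComplex.symm ψ)
  have hψ (x : ι → A) : ((productChar e (Finsupp.single i r) x : Circle) : ℂ) = ψ (x i) := by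
    rw [productChar_single, hr]
    rfl
  rw [AddChar.complexBasis_apply]
  exact Algebra.subset_adjoin ⟨Finsupp.single i r, funext hψ⟩

theorem indicator_pi_mem_trigPolynomials [Finite A] {e : R →+ AddChar A Circle}
    (he : Function.Surjective e) (s : Finset ι) (t : ι → Set A) :
    ((s : Set ι).pi t).indicator 1 ∈ trigPolynomials (productChar e) := by
  classical
  have hprod : ((s : Set ι).pi t).indicator (1 : (ι → A) → ℂ) =
      ∏ i ∈ s, fun x => (t i).indicator 1 (x i) := by
    ext x
    simp only [Finset.prod_apply, Set.indicator_apply, Pi.one_apply, Finset.prod_ite_zero,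
      Finset.prod_const_one, Set.mem_pi, Finset.mem_coe]
  rw [hprod]
  exact prod_mem fun i _ => eval_mem_trigPolynomials he i _

theorem isFourierSystem_productChar [Finite A] [MeasurableSpace A] [MeasurableSingletonClass A]
    {e : R →+ AddChar A Circle} (he : Function.Bijective e) (μ : Measure (ι → A)) :
    IsFourierSystem μ (productChar e) where
  injective := productChar_injective he.1
  measurable := productChar_measurable fun r => measurable_of_finite (e r)
  ae_eq_zero φ hφ hzero := by
    refine ae_eq_zero_of_forall_setIntegral_eq_zero_of_isPiSystem hφ
      generateFrom_squareCylinders.symm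
      (isPiSystem_squareCylinders (fun _ => MeasurableSpace.isPiSystem_measurableSet)
        fun _ => MeasurableSet.univ) ⟨∅, fun _ => Set.univ, by simp⟩ ?_
    rintro _ ⟨s, t, ht, rfl⟩
    have hpi : MeasurableSet ((s : Set ι).pi t) :=
      MeasurableSet.pi s.countable_toSet fun i _ => ht i trivial
    rw [← integral_indicator hpi, ← integral_mul_eq_zero_of_mem_trigPolynomials
      (productChar_measurable fun r => measurable_of_finite (e r)) hφ hzero
      (indicator_pi_mem_trigPolynomials he.2 s t)]
    refine integral_congr_ae (ae_of_all _ fun x => ?_)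
    by_cases hx : x ∈ (s : Set ι).pi t <;> simp [hx]

end ProductCharacters

section BernoulliMeasure

variable {ι A : Type*} [MeasurableSpace A] {ν : Measure A} [IsProbabilityMeasure ν]

theorem IsBernoulliMeasure.eq_infinitePi {μ : Measure (ι → A)} (hμ : IsBernoulliMeasure ν μ) :
    μ = Measure.infinitePi fun _ => ν :=
  Measure.eq_infinitePi _ fun s t ht => hμ s t ht

theorem measurePreserving_bernoulliShift {G : Type*} [Group G] (g : G) :
    MeasurePreserving (bernoulliShift G A g) (Measure.infinitePi fun _ => ν)
      (Measure.infinitePi fun _ => ν) := by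
  have hshift : bernoulliShift G A g =
      MeasurableEquiv.piCongrLeft (fun _ => A) (Equiv.mulLeft g) := by
    funext x h
    obtain ⟨h, rfl⟩ := (Equiv.mulLeft g).surjective h
    rw [MeasurableEquiv.coe_piCongrLeft, Equiv.piCongrLeft_apply_apply, Equiv.coe_mulLeft,
      bernoulliShift, inv_mul_cancel_left]
  rw [hshift]
  exact ⟨MeasurableEquiv.measurable _,
    Measure.infinitePi_map_piCongrLeft (fun _ => ν) (Equiv.mulLeft g)⟩

theorem isAddLeftInvariant_infinitePi [AddGroup A] [MeasurableAdd A] [ν.IsAddLeftInvariant] :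
    (Measure.infinitePi fun _ : ι => ν).IsAddLeftInvariant where
  map_add_left_eq_self y := by
    refine (Measure.infinitePi_map_pi (fun _ : ι => ν) fun i => measurable_const_add (y i)).trans ?_
    simp only [map_add_left_eq_self]

end BernoulliMeasure

theorem isAddLeftInvariant_of_measure_singleton_eq {A : Type*} [AddGroup A] [Countable A]
    [MeasurableSpace A] [MeasurableSingletonClass A] {ν : Measure A}
    (hν : ∀ a b, ν {a} = ν {b}) : ν.IsAddLeftInvariant where
  map_add_left_eq_self a := by
    refine Measure.ext_of_singleton fun b => ?_
    rw [Measure.map_apply (measurable_of_countable _) (measurableSet_singleton b),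
      show (a + ·) ⁻¹' {b} = {-a + b} by ext; simp [eq_neg_add_iff_add_eq], hν]

/-- Precomposition with an isomorphism of groups, as an isomorphism of character groups. -/
def addCharCongrLeft {A B M : Type*} [AddCommGroup A] [AddCommGroup B] [CommMonoid M]
    (e : A ≃+ B) : AddChar B M ≃+ AddChar A M where
  toFun ψ := ψ.compAddMonoidHom e.toAddMonoidHom
  invFun ψ := ψ.compAddMonoidHom e.symm.toAddMonoidHom
  left_inv ψ := DFunLike.ext _ _ fun b => congrArg ψ (e.apply_symm_apply b)
  right_inv ψ := DFunLike.ext _ _ fun a => congrArg ψ (e.symm_apply_apply a)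
  map_add' _ _ := rfl

/-- The self-duality of the cyclic group of order `k`, with the dual modelled on `Fin k`. -/
def zmodEquivAddCharFin (k : ℕ) [NeZero k] : ZMod k ≃+ AddChar (Fin k) Circle :=
  (AddChar.zmodAddEquiv.trans AddChar.circleEquivComplex.symm).trans
    (addCharCongrLeft (ZMod.finEquiv k).toAddEquiv)

theorem h1_zg_mod_k_trivial_of_psi1_surjective_general
    {R G : Type u} [CommRing R] [Group G] [Infinite G]
    {A : Type*} [AddCommGroup A] [Finite A] [MeasurableSpace A] [MeasurableSingletonClass A]
    (e : R ≃+ AddChar A Circle)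
    {ν : Measure A} [IsProbabilityMeasure ν] (hν : ∀ a b, ν {a} = ν {b})
    {μ : Measure (G → A)} (hμ : IsBernoulliMeasure ν μ)
    (hsurj : IsCocycleSuperrigid (bernoulliShift G A) μ) :
    ∀ x : groupCohomology.H1 (Rep.ofMulAction R G G), x = 0 := by
  obtain rfl := hμ.eq_infinitePi
  have := isAddLeftInvariant_of_measure_singleton_eq hν
  have := isAddLeftInvariant_infinitePi (ι := G) (ν := ν)
  have horbit (g : G) : (MulAction.orbit G g).Infinite :=
    (MulAction.orbit_eq_univ G g).symm ▸ Set.infinite_univ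
  have he : Function.Bijective e.toAddMonoidHom := e.bijective
  let χ : Rep.ofMulAction R G G →+ AddChar (G → A) Circle :=
    (productChar e.toAddMonoidHom).comp MonoidAlgebra.coeffAddEquiv.toAddMonoidHom
  have hχ : IsFourierSystem (Measure.infinitePi fun _ : G => ν) χ :=
    (isFourierSystem_productChar he _).comp_addEquiv MonoidAlgebra.coeffAddEquiv
  have hequiv (g : G) (v : MonoidAlgebra R G) (x : G → A) :
      χ ((Rep.ofMulAction R G G).ρ g v) x = χ v (bernoulliShift G A g⁻¹ x) :=
    productChar_bernoulliShift e.toAddMonoidHom g v x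
  exact H1_eq_zero_of_isCocycleSuperrigid hχ measurePreserving_bernoulliShift hequiv
    (infinite_range_ofMulAction horbit) hsurj

/-- Let `G ∈ 𝒢` be countable infinite, `k ≥ 2`, and consider the
Bernoulli shift `G ↷ ([k]^G, ν_k^G)` where `ν_k` is the uniform probability measure on
the `k`-point set `[k] = Fin k`.  If `Ψ₁ : H¹(G, 𝕋) → H¹(G ↷ [k]^G; 𝕋)` is surjective
— equivalently, this shift is `𝕋`-cocycle superrigid — then `H¹(G, ℤG/kℤG) = 0`, where
`ℤG/kℤG` is realized as the group algebra of `G` over `ℤ/kℤ` with the left regular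
`G`-action. -/
theorem h1_zg_mod_k_trivial_of_psi1_surjective
    (G : Type) [Group G] [Countable G] [Infinite G] (hG : InClassG G)
    (k : ℕ) (hk : 2 ≤ k)
    (ν : Measure (Fin k)) [IsProbabilityMeasure ν] (hunif : ∀ i : Fin k, ν {i} = (k : ENNReal)⁻¹)
    (μ : Measure (G → Fin k)) [IsProbabilityMeasure μ] (hμ : IsBernoulliMeasure ν μ)
    (hsurj : IsCocycleSuperrigid (bernoulliShift G (Fin k)) μ) :
    ∀ x : groupCohomology.H1 (Rep.ofMulAction (ZMod k) G G), x = 0 := by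
  have : NeZero k := ⟨by omega⟩
  exact h1_zg_mod_k_trivial_of_psi1_surjective_general (zmodEquivAddCharFin k)
    (fun i j => (hunif i).trans (hunif j).symm) hμ hsurj

end AlgActCohomology
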